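/- arXiv:1506.07741 — 3 statements merged into one kernel-verified Lean document; each statement's English description precedes it below -/
import Mathlib

section
/- Let n and a be integers with n ≥ 2 and a ≥ 2. For each positive integer k, let I_root(T^{n,k,a}) denote the number of independent sets (of any size) of T^{n,k,a} that contain its root, and let I_leaf(T^{n,k,a}) denote the number of independent sets (of any size) of T^{n,k,a} that contain a fixed leaf. Then the ratio I_root(T^{n,k,a}) / I_leaf(T^{n,k,a}) tends to (F(a−1) + F(a−2)) / (2·F(a−2)) as k tends to infinity. -/
open Finset SimpleGraph
open scoped Classical

variable {V : Type*}

/-- The finset of independent sets of a finite graph `G` (of any size, including `∅`). -/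
noncomputable def indepSets [Fintype V] (G : SimpleGraph V) : Finset (Finset V) :=
  univ.filter fun A => ∀ x ∈ A, ∀ y ∈ A, ¬ G.Adj x y

/-- The number of independent sets (of any size) of `G` containing the vertex `v`. -/
noncomputable def countContaining [Fintype V] (G : SimpleGraph V) (v : V) : ℕ :=
  ((indepSets G).filter fun A => v ∈ A).card

/-- `F a` is the number of independent sets (including `∅`) of the path on `a` vertices. -/
noncomputable def F (a : ℕ) : ℕ := (indepSets (pathGraph a)).card

/-- The `(k,a)`-claw: an elongated claw with `k` limbs each of length `a`.  The vertex
`none` is the root and `some (i, j)` is the vertex of limb `i` at distance `j + 1` from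
the root (so `some (i, a − 1)` is the leaf of limb `i`). -/
def kaClaw (k a : ℕ) : SimpleGraph (Option (Fin k × Fin a)) :=
  SimpleGraph.fromRel (fun x y =>
    (∃ i : Fin k, ∃ j : Fin a, x = none ∧ y = some (i, j) ∧ (j : ℕ) = 0) ∨
    (∃ (i : Fin k) (j j' : Fin a), x = some (i, j) ∧ y = some (i, j') ∧ (j' : ℕ) = (j : ℕ) + 1))

/-- The tree `T^{n,k,a}`: `n` disjoint `(k,a)`-claws together with one further vertex
(`none`, the root of `T^{n,k,a}`) joined by an edge to the root of each `(k,a)`-claw. -/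
def superClaw (n k a : ℕ) : SimpleGraph (Option (Fin n × Option (Fin k × Fin a))) :=
  SimpleGraph.fromRel (fun x y =>
    (∃ m : Fin n, x = none ∧ y = some (m, none)) ∨
    (∃ (m : Fin n) (u w : Option (Fin k × Fin a)),
      x = some (m, u) ∧ y = some (m, w) ∧ (kaClaw k a).Adj u w))

/-!
A `(k,a)`-claw arises from the path `P_a` by joining a new root to an end of each of `k` copies,
and `T^{n,k,a}` arises from the claw in the same way. Once it is decided whether the new root
belongs to the independent set, the choices in the copies are independent, so all counts are
sums of at most two products.

Let `G` be any finite graph with vertices `r` and `v`, and let `K` be the graph made of `k` copies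
of `G` joined to a new root at `r`. The independent sets of `K` containing its root form a
proportion of order `ρ ^ k`, where `ρ < 1` is the proportion of independent sets of `G` avoiding
`r`. Hence, asymptotically, a proportion `p = #{A ∋ v} / #{A}` (over independent sets of `G`) of
the independent sets of `K` contains a given copy of `v`, whether or not the root of `K` is
excluded. One level up, the sets with the root and those without it therefore contribute `p` each
to the ratio of leaf count to root count, which tends to `2 * p`. For `G = P_a` and `v` an end,
`p = F (a - 2) / F a`.
-/

open Filter Topology

section IndependentSets

variable [Fintype V] {G : SimpleGraph V}

/-- The number of independent sets of `G` avoiding the vertex `r`. -/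
noncomputable def countAvoiding (G : SimpleGraph V) (r : V) : ℕ :=
  #{A ∈ indepSets G | r ∉ A}

/-- The number of independent sets of `G` containing the vertex `v` and avoiding the
vertex `r`. -/
noncomputable def countContainingAvoiding (G : SimpleGraph V) (v r : V) : ℕ :=
  #{A ∈ indepSets G | v ∈ A ∧ r ∉ A}

theorem mem_indepSets {A : Finset V} :
    A ∈ indepSets G ↔ ∀ x ∈ A, ∀ y ∈ A, ¬ G.Adj x y := by
  simp [indepSets]

theorem mem_indepSets_of_subset {A B : Finset V} (hA : A ∈ indepSets G) (hBA : B ⊆ A) :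
    B ∈ indepSets G :=
  mem_indepSets.2 fun x hx y hy => mem_indepSets.1 hA x (hBA hx) y (hBA hy)

theorem insert_mem_indepSets {A : Finset V} {v : V} :
    insert v A ∈ indepSets G ↔ A ∈ indepSets G ∧ ∀ w ∈ A, ¬ G.Adj v w := by
  simp only [mem_indepSets, mem_insert]
  constructor
  · exact fun h => ⟨fun x hx y hy => h x (.inr hx) y (.inr hy),
      fun w hw => h v (.inl rfl) w (.inr hw)⟩
  · rintro ⟨hA, hv⟩ x (rfl | hx) y (rfl | hy)
    · exact G.irrefl
    · exact hv y hy
    · exact fun hxy => hv x hx hxy.symm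
    · exact hA x hx y hy

theorem countContaining_add_countAvoiding (G : SimpleGraph V) (v : V) :
    countContaining G v + countAvoiding G v = #(indepSets G) :=
  card_filter_add_card_filter_not _

theorem countContaining_eq_countContainingAvoiding_add (G : SimpleGraph V) (v r : V) :
    countContaining G v =
      countContainingAvoiding G v r + #{A ∈ indepSets G | v ∈ A ∧ r ∈ A} := by
  rw [countContaining, ← card_filter_add_card_filter_not (fun A => r ∈ A), add_comm,
    filter_filter, filter_filter, countContainingAvoiding]

theorem countContaining_pos (G : SimpleGraph V) (v : V) : 0 < countContaining G v :=
  card_pos.2 ⟨{v}, by simp [mem_indepSets]⟩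

theorem countAvoiding_pos (G : SimpleGraph V) (r : V) : 0 < countAvoiding G r :=
  card_pos.2 ⟨∅, by simp [mem_indepSets]⟩

theorem card_indepSets_pos (G : SimpleGraph V) : 0 < #(indepSets G) :=
  card_pos.2 ⟨∅, by simp [mem_indepSets]⟩

theorem countAvoiding_lt_card_indepSets (G : SimpleGraph V) (r : V) :
    countAvoiding G r < #(indepSets G) := by
  have := countContaining_add_countAvoiding G r
  have := countContaining_pos G r
  omega

theorem tendsto_countAvoiding_div_card_indepSets_pow (G : SimpleGraph V) (r : V) :
    Tendsto (fun k : ℕ => (countAvoiding G r / #(indepSets G) : ℝ) ^ k) atTop (𝓝 0) := by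
  have hpos : (0 : ℝ) < #(indepSets G) := mod_cast card_indepSets_pos G
  refine tendsto_pow_atTop_nhds_zero_of_lt_one (by positivity) ((div_lt_one hpos).2 ?_)
  exact_mod_cast countAvoiding_lt_card_indepSets G r

theorem countContaining_eq_card_filter_nonneighbors (G : SimpleGraph V) (v : V) :
    countContaining G v = #{A ∈ indepSets G | ∀ w ∈ A, w ≠ v ∧ ¬ G.Adj v w} := by
  refine card_nbij' (fun A => A.erase v) (fun A => insert v A) ?_ ?_ ?_ ?_
  · intro A hA
    obtain ⟨hA, hv⟩ := mem_filter.1 hA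
    refine mem_filter.2 ⟨mem_indepSets_of_subset hA (erase_subset v A), fun w hw => ?_⟩
    exact ⟨ne_of_mem_erase hw, mem_indepSets.1 hA v hv w (mem_of_mem_erase hw)⟩
  · intro A hA
    obtain ⟨hA, hv⟩ := mem_filter.1 hA
    exact mem_filter.2 ⟨insert_mem_indepSets.2 ⟨hA, fun w hw => (hv w hw).2⟩,
      mem_insert_self v A⟩
  · exact fun A hA => insert_erase (mem_filter.1 hA).2
  · exact fun A hA => erase_insert fun hv => ((mem_filter.1 hA).2 v hv).1 rfl

theorem card_indepSets_eq_card_filter_range {W : Type*} [Fintype W] {H : SimpleGraph W}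
    (f : H ↪g G) : #(indepSets H) = #{A ∈ indepSets G | ∀ x ∈ A, x ∈ Set.range f} := by
  refine card_bij (fun A _ => A.map f.toEmbedding) ?_ ?_ ?_
  · intro A hA
    simpa [mem_indepSets] using mem_indepSets.1 hA
  · exact fun A _ B _ h => map_injective _ h
  · intro A hA
    obtain ⟨hA, hrange⟩ := mem_filter.1 hA
    obtain ⟨B, -, rfl⟩ : ∃ B ⊆ univ, A = B.map f.toEmbedding :=
      subset_map_iff.1 fun x hx => by simpa using hrange x hx
    exact ⟨B, by simpa [mem_indepSets] using hA, rfl⟩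

end IndependentSets

section Path

/-- The path on `b` vertices as the initial segment of the path on `a ≥ b` vertices. -/
def pathGraphCastLE {a b : ℕ} (h : b ≤ a) : pathGraph b ↪g pathGraph a where
  toEmbedding := Fin.castLEEmb h
  map_rel_iff' := by simp [pathGraph_adj]

theorem F_eq_card_filter_lt {a b : ℕ} (h : b ≤ a) :
    F b = #{A ∈ indepSets (pathGraph a) | ∀ i ∈ A, i.val < b} := by
  have hrange : Set.range (pathGraphCastLE h) = {i : Fin a | i.val < b} := Fin.range_castLE h
  rw [F, card_indepSets_eq_card_filter_range (pathGraphCastLE h)]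
  simp only [hrange, Set.mem_ofPred_eq]

theorem countAvoiding_pathGraph_last (a : ℕ) :
    countAvoiding (pathGraph (a + 1)) (Fin.last a) = F a := by
  rw [F_eq_card_filter_lt a.le_succ, countAvoiding]
  congr! 2 with A
  exact ⟨fun h i hi => Fin.val_lt_last fun hlast => h (hlast ▸ hi),
    fun h hlast => (h _ hlast).false⟩

theorem countContaining_pathGraph_last (a : ℕ) :
    countContaining (pathGraph (a + 2)) (Fin.last (a + 1)) = F a := by
  rw [F_eq_card_filter_lt (a.le_add_right 2), countContaining_eq_card_filter_nonneighbors]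
  congr! 4 with A
  rw [pathGraph_adj, Fin.ne_iff_vne, Fin.val_last]
  omega

theorem F_add_two (a : ℕ) : F (a + 2) = F (a + 1) + F a := by
  have h := countContaining_add_countAvoiding (pathGraph (a + 2)) (Fin.last (a + 1))
  rw [countContaining_pathGraph_last, countAvoiding_pathGraph_last] at h
  rw [F, ← h, add_comm]

end Path

/-- The graph made of one copy of `G` for each `i : ι` together with one further vertex
`none`, joined by an edge to the vertex `r` of each copy; `some (i, w)` is the vertex `w`
of the copy `i`. -/
def rootedCopies (ι : Type*) (G : SimpleGraph V) (r : V) : SimpleGraph (Option (ι × V)) where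
  Adj
    | none, none => False
    | none, some (_, w) => w = r
    | some (_, u), none => u = r
    | some (i, u), some (j, w) => i = j ∧ G.Adj u w
  symm := ⟨by
    rintro (_ | ⟨i, u⟩) (_ | ⟨j, w⟩) h
    exacts [h, h, h, ⟨h.1.symm, h.2.symm⟩]⟩
  loopless := ⟨by
    rintro (_ | ⟨i, u⟩) h
    exacts [h, G.irrefl h.2]⟩

theorem superClaw_eq_rootedCopies (n k a : ℕ) :
    superClaw n k a = rootedCopies (Fin n) (kaClaw k a) none := by
  ext (_ | ⟨i, u⟩) (_ | ⟨j, w⟩)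
  · simp [superClaw, rootedCopies]
  · simp [superClaw, rootedCopies]
  · simp [superClaw, rootedCopies]
  · simp only [superClaw, rootedCopies, fromRel_adj]
    grind [SimpleGraph.adj_comm, SimpleGraph.irrefl]

theorem kaClaw_eq_rootedCopies (k a : ℕ) :
    kaClaw k (a + 1) = rootedCopies (Fin k) (pathGraph (a + 1)) 0 := by
  ext (_ | ⟨i, u⟩) (_ | ⟨j, w⟩)
  · simp [kaClaw, rootedCopies]
  · simp [kaClaw, rootedCopies]
  · simp [kaClaw, rootedCopies]
  · simp only [kaClaw, rootedCopies, fromRel_adj, pathGraph_adj]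
    grind

namespace rootedCopies

variable {ι : Type*} [Fintype V]

/-- The part of a vertex set of `rootedCopies ι G r` lying in the copy `i` of `G`. -/
noncomputable def branch (A : Finset (Option (ι × V))) (i : ι) : Finset V :=
  {w | some (i, w) ∈ A}

@[simp]
theorem mem_branch {A : Finset (Option (ι × V))} {i : ι} {w : V} :
    w ∈ branch A i ↔ some (i, w) ∈ A := by
  simp [branch]

variable [Fintype ι]

/-- The vertex set of `rootedCopies ι G r` with parts `B i` in the copies of `G`, which
contains the root exactly when `c` holds. -/
noncomputable def assemble (c : Prop) (B : ι → Finset V) : Finset (Option (ι × V)) :=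
  {x | x.elim c fun y => y.2 ∈ B y.1}

@[simp]
theorem none_mem_assemble {c : Prop} {B : ι → Finset V} : none ∈ assemble c B ↔ c := by
  simp [assemble]

@[simp]
theorem some_mem_assemble {c : Prop} {B : ι → Finset V} {i : ι} {w : V} :
    some (i, w) ∈ assemble c B ↔ w ∈ B i := by
  simp [assemble]

theorem branch_assemble (c : Prop) (B : ι → Finset V) : branch (assemble c B) = B := by
  ext i w
  simp

theorem assemble_branch {c : Prop} {A : Finset (Option (ι × V))} (hc : none ∈ A ↔ c) :
    assemble c (branch A) = A := by
  ext (_ | ⟨i, w⟩)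
  · simp [hc]
  · simp

variable (G : SimpleGraph V) (r : V)

theorem mem_indepSets_iff {A : Finset (Option (ι × V))} :
    A ∈ indepSets (rootedCopies ι G r) ↔
      ∀ i, branch A i ∈ indepSets G ∧ (none ∈ A → r ∉ branch A i) := by
  simp only [mem_indepSets, mem_branch]
  constructor
  · exact fun h i => ⟨fun u hu w hw huw => h _ hu _ hw ⟨rfl, huw⟩,
      fun hroot hr => h _ hroot _ hr rfl⟩
  · rintro h (_ | ⟨i, u⟩) hx (_ | ⟨j, w⟩) hy hxy
    · exact hxy
    · obtain rfl : w = r := hxy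
      exact (h j).2 hx hy
    · obtain rfl : u = r := hxy
      exact (h i).2 hy hx
    · obtain ⟨rfl, huw⟩ : i = j ∧ G.Adj u w := hxy
      exact (h i).1 u hx w hy huw

theorem card_filter_branch (c : Prop) (p : ι → Finset V → Prop) :
    #{A ∈ indepSets (rootedCopies ι G r) | (none ∈ A ↔ c) ∧ ∀ i, p i (branch A i)} =
      ∏ i, #{B ∈ indepSets G | (c → r ∉ B) ∧ p i B} := by
  rw [← Fintype.card_piFinset]
  refine card_nbij' branch (assemble c) ?_ ?_ ?_ ?_
  · intro A hA
    obtain ⟨hA, hc, hp⟩ := mem_filter.1 hA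
    refine Fintype.mem_piFinset.2 fun i => mem_filter.2 ?_
    have hi := (mem_indepSets_iff G r).1 hA i
    exact ⟨hi.1, fun h => hi.2 (hc.2 h), hp i⟩
  · intro B hB
    have hB i := mem_filter.1 (Fintype.mem_piFinset.1 hB i)
    refine mem_filter.2 ⟨(mem_indepSets_iff G r).2 ?_, none_mem_assemble, ?_⟩ <;>
      rw [branch_assemble]
    · exact fun i => ⟨(hB i).1, fun h => (hB i).2.1 (none_mem_assemble.1 h)⟩
    · exact fun i => (hB i).2.2
  · exact fun A hA => assemble_branch (mem_filter.1 hA).2.1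
  · exact fun B _ => branch_assemble c B

theorem card_filter_mem_branch (c : Prop) (i : ι) (v : V) :
    #{A ∈ indepSets (rootedCopies ι G r) | (none ∈ A ↔ c) ∧ some (i, v) ∈ A} =
      #{B ∈ indepSets G | (c → r ∉ B) ∧ v ∈ B} *
        #{B ∈ indepSets G | c → r ∉ B} ^ (Fintype.card ι - 1) := by
  have h := card_filter_branch G r c fun j B => j = i → v ∈ B
  simp only [forall_eq, mem_branch] at h
  rw [h, ← mul_prod_erase univ _ (mem_univ i), ← card_univ, ← card_erase_of_mem (mem_univ i),
    ← prod_const]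
  congr 1
  · simp
  · refine prod_congr rfl fun j hj => ?_
    simp [ne_of_mem_erase hj]

variable (ι)

theorem countAvoiding_root :
    countAvoiding (rootedCopies ι G r) none = #(indepSets G) ^ Fintype.card ι := by
  convert card_filter_branch (ι := ι) G r False fun _ _ => True using 1
  · rw [countAvoiding]
    congr! 2
    simp
  · simp

theorem countContaining_root :
    countContaining (rootedCopies ι G r) none = countAvoiding G r ^ Fintype.card ι := by
  convert card_filter_branch (ι := ι) G r True fun _ _ => True using 1
  · rw [countContaining]
    congr! 2
    simp
  · simp [countAvoiding]

theorem card_indepSets :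
    #(indepSets (rootedCopies ι G r)) =
      countAvoiding G r ^ Fintype.card ι + #(indepSets G) ^ Fintype.card ι := by
  rw [← countContaining_add_countAvoiding _ none, countContaining_root, countAvoiding_root]

variable {ι}

theorem countContainingAvoiding_some_root (i : ι) (v : V) :
    countContainingAvoiding (rootedCopies ι G r) (some (i, v)) none =
      countContaining G v * #(indepSets G) ^ (Fintype.card ι - 1) := by
  simpa [countContainingAvoiding, countContaining, and_comm] using
    card_filter_mem_branch G r False i v

theorem countContaining_some (i : ι) (v : V) :
    countContaining (rootedCopies ι G r) (some (i, v)) =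
      countContaining G v * #(indepSets G) ^ (Fintype.card ι - 1) +
        countContainingAvoiding G v r * countAvoiding G r ^ (Fintype.card ι - 1) := by
  rw [countContaining_eq_countContainingAvoiding_add _ _ none, countContainingAvoiding_some_root]
  congr 1
  simpa [countContainingAvoiding, countAvoiding, and_comm] using
    card_filter_mem_branch G r True i v

theorem countContaining_some_div_root (i : ι) (v : V) :
    (countContaining (rootedCopies ι G r) (some (i, v)) : ℝ) /
        countContaining (rootedCopies ι G r) none =
      countContaining G v / countAvoiding G r *
          (#(indepSets G) / countAvoiding G r : ℝ) ^ (Fintype.card ι - 1) +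
        countContainingAvoiding G v r / countAvoiding G r := by
  have hpos : (0 : ℝ) < countAvoiding G r := mod_cast countAvoiding_pos G r
  obtain ⟨m, hcard⟩ := Nat.exists_eq_add_one.2 (Fintype.card_pos_iff.2 ⟨i⟩)
  rw [countContaining_some, countContaining_root, hcard, Nat.add_sub_cancel]
  push_cast
  simp only [pow_succ, div_pow]
  field_simp

theorem countContainingAvoiding_some_div_countAvoiding (i : ι) (v : V) :
    (countContainingAvoiding (rootedCopies ι G r) (some (i, v)) none : ℝ) /
        countAvoiding (rootedCopies ι G r) none =
      countContaining G v / #(indepSets G) := by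
  have hpos : (0 : ℝ) < #(indepSets G) := mod_cast card_indepSets_pos G
  obtain ⟨m, hcard⟩ := Nat.exists_eq_add_one.2 (Fintype.card_pos_iff.2 ⟨i⟩)
  rw [countContainingAvoiding_some_root, countAvoiding_root, hcard, Nat.add_sub_cancel]
  push_cast
  rw [pow_succ]
  field_simp

theorem tendsto_card_indepSets_div_countAvoiding :
    Tendsto (fun k : ℕ => (#(indepSets (rootedCopies (Fin (k + 1)) G r)) : ℝ) /
      countAvoiding (rootedCopies (Fin (k + 1)) G r) none) atTop (𝓝 1) := by
  have hpos : (0 : ℝ) < #(indepSets G) := mod_cast card_indepSets_pos G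
  have hlim := ((tendsto_add_atTop_iff_nat 1).2
    (tendsto_countAvoiding_div_card_indepSets_pow G r)).add_const 1
  rw [zero_add] at hlim
  refine hlim.congr fun k => ?_
  rw [card_indepSets, countAvoiding_root, Fintype.card_fin]
  push_cast
  simp only [pow_succ, div_pow]
  field_simp

theorem tendsto_countContaining_div_countAvoiding (v : V) :
    Tendsto (fun k : ℕ => (countContaining (rootedCopies (Fin (k + 1)) G r) (some (0, v)) : ℝ) /
      countAvoiding (rootedCopies (Fin (k + 1)) G r) none) atTop
      (𝓝 (countContaining G v / #(indepSets G))) := by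
  have hpos : (0 : ℝ) < #(indepSets G) := mod_cast card_indepSets_pos G
  have hlim := ((tendsto_countAvoiding_div_card_indepSets_pow G r).const_mul
    (countContainingAvoiding G v r / #(indepSets G) : ℝ)).const_add
      (countContaining G v / #(indepSets G) : ℝ)
  rw [mul_zero, add_zero] at hlim
  refine hlim.congr fun k => ?_
  rw [countContaining_some, countAvoiding_root, Fintype.card_fin, Nat.add_sub_cancel]
  push_cast
  simp only [pow_succ, div_pow]
  field_simp

end rootedCopies

open rootedCopies in
theorem superClaw_root_leaf_ratio_general {ι : Type*} [Fintype ι] [Fintype V]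
    (G : SimpleGraph V) (r v : V) (i : ι) :
    Tendsto
      (fun k : ℕ =>
        (countContaining (rootedCopies ι (rootedCopies (Fin (k + 1)) G r) none) none : ℝ) /
          countContaining (rootedCopies ι (rootedCopies (Fin (k + 1)) G r) none)
            (some (i, some (0, v))))
      atTop (𝓝 (#(indepSets G) / (2 * countContaining G v))) := by
  have hpos : (0 : ℝ) < #(indepSets G) := mod_cast card_indepSets_pos G
  have hv : (0 : ℝ) < countContaining G v := mod_cast countContaining_pos G v
  have hlim := ((tendsto_countContaining_div_countAvoiding G r v).mul
    ((tendsto_card_indepSets_div_countAvoiding G r).pow (Fintype.card ι - 1))).add_const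
      (countContaining G v / #(indepSets G) : ℝ)
  rw [one_pow, mul_one, ← two_mul, ← mul_div_assoc] at hlim
  rw [← inv_div (2 * _ : ℝ)]
  refine (hlim.inv₀ (by positivity)).congr fun k => ?_
  rw [← inv_div (countContaining _ (some (i, _)) : ℝ), countContaining_some_div_root,
    countContainingAvoiding_some_div_countAvoiding]

/-- For fixed `n ≥ 2` and `a ≥ 2`, the ratio of the number of
independent sets of `T^{n,k,a}` containing the root to the number containing a fixed leaf
tends to `(F(a−1) + F(a−2)) / (2·F(a−2))` as `k → ∞`. -/
theorem superClaw_root_leaf_ratio (n a : ℕ) (hn : 2 ≤ n) (ha : 2 ≤ a) :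
    Filter.Tendsto
      (fun k : ℕ =>
        (countContaining (superClaw n (k + 1) a)
            (none : Option (Fin n × Option (Fin (k + 1) × Fin a))) : ℝ) /
          (countContaining (superClaw n (k + 1) a)
            (some (⟨0, by omega⟩, some (⟨0, by omega⟩, ⟨a - 1, by omega⟩))) : ℝ))
      Filter.atTop
      (nhds (((F (a - 1) : ℝ) + (F (a - 2) : ℝ)) / (2 * (F (a - 2) : ℝ)))) := by
  obtain ⟨b, rfl⟩ := Nat.exists_eq_add_of_le' ha
  have hF : (#(indepSets (pathGraph (b + 2))) : ℝ) = F (b + 1) + F b := mod_cast F_add_two b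
  have hlim := superClaw_root_leaf_ratio_general (pathGraph (b + 2)) 0 (Fin.last (b + 1))
    (⟨0, by omega⟩ : Fin n)
  simp only [← kaClaw_eq_rootedCopies, ← superClaw_eq_rootedCopies,
    countContaining_pathGraph_last, hF] at hlim
  exact hlim
end

section
/- Let n, k, a and r be positive integers and let w be a vertex of T^{n,k,a} that is neither the root of T^{n,k,a} nor a leaf. Then there exists a leaf y of T^{n,k,a} such that |I^(r)_y(T^{n,k,a})| ≥ |I^(r)_w(T^{n,k,a})|. -/
open Finset SimpleGraph
open scoped Classical

variable {V : Type*}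

/-- The finset of independent sets of size `r` of `G`, i.e. `I^(r)(G)`. -/
noncomputable def indepSetsSize [Fintype V] (G : SimpleGraph V) (r : ℕ) : Finset (Finset V) :=
  (indepSets G).filter fun A => A.card = r

/-- The `r`-star centred at `v`: independent sets of size `r` containing `v`. -/
noncomputable def ekrStar [Fintype V] (G : SimpleGraph V) (r : ℕ) (v : V) : Finset (Finset V) :=
  (indepSetsSize G r).filter fun A => v ∈ A

/-! Let `w` be a vertex on a limb and `y` the leaf at the end of that limb. The path from `w` to `y`
meets the rest of the tree only at `w`, so reversing it changes no edge except those joining `w` to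
the rest of the tree. An independent set containing `w` contains no neighbour of `w`, hence it stays
independent under the reversal, which therefore injects the star at `w` into the star at `y`. -/

section Attached

variable {U W : Type*} {F : SimpleGraph U} {H : SimpleGraph W} {G : SimpleGraph V}

/-- The copy of `H` in `G` given by the induced embedding `p` is joined to the rest of `G` only by
edges at the vertex `p c`. -/
def IsAttachedOnlyAt (p : H ↪g G) (c : W) : Prop :=
  ∀ t x, G.Adj (p t) x → x ∉ Set.range p → t = c

theorem IsAttachedOnlyAt.comp {p : F ↪g H} {q : H ↪g G} {c : U} {d : W}
    (hq : IsAttachedOnlyAt q d) (hp : IsAttachedOnlyAt p c) (hcd : ∀ s, p s = d → s = c) :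
    IsAttachedOnlyAt (q.comp p) c := by
  intro t x hadj hx
  by_cases hxq : x ∈ Set.range q
  · obtain ⟨y, rfl⟩ := hxq
    refine hp t y (q.map_adj_iff.mp hadj) ?_
    rintro ⟨s, rfl⟩
    exact hx ⟨s, rfl⟩
  · exact hcd t (hq (p t) x hadj hxq)

theorem IsAttachedOnlyAt.degree_eq {p : H ↪g G} {c t : W} (hp : IsAttachedOnlyAt p c)
    (ht : t ≠ c) [Fintype (H.neighborSet t)] [Fintype (G.neighborSet (p t))] :
    G.degree (p t) = H.degree t := by
  have hmap : G.neighborFinset (p t) = (H.neighborFinset t).map p.toEmbedding := by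
    ext x
    simp only [mem_neighborFinset, Finset.mem_map]
    constructor
    · intro hadj
      obtain ⟨s, rfl⟩ := not_not.mp (mt (hp t x hadj) ht)
      exact ⟨s, p.map_adj_iff.mp hadj, rfl⟩
    · rintro ⟨s, hadj, rfl⟩
      exact p.map_adj_iff.mpr hadj
  rw [← card_neighborFinset_eq_degree, hmap, card_map, card_neighborFinset_eq_degree]

/-- The permutation of the vertices of `G` that acts as the automorphism `φ` on the copy `p` of `H`
and fixes every other vertex. It need not be an automorphism of `G`. -/
noncomputable def permViaEmbedding (p : H ↪g G) (φ : H ≃g H) : Equiv.Perm V :=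
  Equiv.Perm.viaEmbedding φ.toEquiv p.toEmbedding

theorem permViaEmbedding_apply (p : H ↪g G) (φ : H ≃g H) (t : W) :
    permViaEmbedding p φ (p t) = p (φ t) :=
  Equiv.Perm.viaEmbedding_apply _ _ _

theorem permViaEmbedding_apply_of_notMem (p : H ↪g G) (φ : H ≃g H) {x : V}
    (hx : x ∉ Set.range p) : permViaEmbedding p φ x = x :=
  Equiv.Perm.viaEmbedding_apply_of_notMem _ _ _ hx

theorem IsAttachedOnlyAt.adj_or_adj_of_adj_permViaEmbedding {p : H ↪g G} {c : W}
    (hp : IsAttachedOnlyAt p c) (φ : H ≃g H) {u v : V}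
    (h : G.Adj (permViaEmbedding p φ u) (permViaEmbedding p φ v)) :
    G.Adj u v ∨ G.Adj (p c) u ∨ G.Adj (p c) v := by
  by_cases hu : u ∈ Set.range p <;> by_cases hv : v ∈ Set.range p
  · obtain ⟨s, rfl⟩ := hu
    obtain ⟨t, rfl⟩ := hv
    rw [permViaEmbedding_apply, permViaEmbedding_apply, p.map_adj_iff, φ.map_adj_iff] at h
    exact .inl (p.map_adj_iff.mpr h)
  · obtain ⟨s, rfl⟩ := hu
    rw [permViaEmbedding_apply, permViaEmbedding_apply_of_notMem p φ hv] at h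
    exact .inr (.inr (hp _ v h hv ▸ h))
  · obtain ⟨t, rfl⟩ := hv
    rw [permViaEmbedding_apply, permViaEmbedding_apply_of_notMem p φ hu] at h
    exact .inr (.inl (hp _ u h.symm hu ▸ h.symm))
  · rw [permViaEmbedding_apply_of_notMem p φ hu, permViaEmbedding_apply_of_notMem p φ hv] at h
    exact .inl h

end Attached

section Star

variable {W : Type*} [Fintype V] {G : SimpleGraph V} {H : SimpleGraph W} {r : ℕ}

theorem mem_ekrStar {v : V} {A : Finset V} :
    A ∈ ekrStar G r v ↔ ((∀ x ∈ A, ∀ y ∈ A, ¬ G.Adj x y) ∧ #A = r) ∧ v ∈ A := by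
  simp only [ekrStar, indepSetsSize, indepSets, mem_filter, mem_univ, true_and]

theorem card_ekrStar_le_of_perm (σ : Equiv.Perm V) (w : V)
    (hσ : ∀ u v, G.Adj (σ u) (σ v) → G.Adj u v ∨ G.Adj w u ∨ G.Adj w v) :
    #(ekrStar G r w) ≤ #(ekrStar G r (σ w)) := by
  refine card_le_card_of_injOn (Finset.map σ.toEmbedding) (fun A hA ↦ ?_)
    (Finset.map_injective _).injOn
  obtain ⟨⟨hindep, hcard⟩, hwA⟩ := mem_ekrStar.mp hA
  refine mem_ekrStar.mpr ⟨⟨?_, by rw [card_map, hcard]⟩, mem_map_of_mem _ hwA⟩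
  simp only [Finset.forall_mem_map, Equiv.coe_toEmbedding]
  intro u hu v hv huv
  obtain h | h | h := hσ u v huv
  · exact hindep u hu v hv h
  · exact hindep w hwA u hu h
  · exact hindep w hwA v hv h

theorem IsAttachedOnlyAt.card_ekrStar_le {p : H ↪g G} {c : W} (hp : IsAttachedOnlyAt p c)
    (φ : H ≃g H) : #(ekrStar G r (p c)) ≤ #(ekrStar G r (p (φ c))) := by
  rw [← permViaEmbedding_apply p φ c]
  exact card_ekrStar_le_of_perm _ _ fun _ _ ↦ hp.adj_or_adj_of_adj_permViaEmbedding φ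

end Star

section PendantPath

variable {ℓ : ℕ}

/-- The reversal of a path, as an automorphism. -/
def pathGraphRev (n : ℕ) : pathGraph n ≃g pathGraph n where
  toEquiv := Fin.revPerm
  map_rel_iff' := by
    intro s t
    simp only [pathGraph_adj, Fin.revPerm_apply, Fin.val_rev]
    omega

/-- The final segment of a path with vertices `0, …, ℓ` that starts at the vertex `t`. -/
def pathGraphTail (t : Fin (ℓ + 1)) : pathGraph (ℓ - t + 1) ↪g pathGraph (ℓ + 1) where
  toFun s := ⟨t + s, by omega⟩
  inj' s s' h := by simpa [Fin.ext_iff] using h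
  map_rel_iff' := by
    intro s s'
    change (pathGraph (ℓ + 1)).Adj ⟨t + s, _⟩ ⟨t + s', _⟩ ↔ _
    simp only [pathGraph_adj]
    omega

@[simp]
theorem val_pathGraphTail (t : Fin (ℓ + 1)) (s : Fin (ℓ - t + 1)) :
    (pathGraphTail t s : ℕ) = t + s :=
  rfl

theorem isAttachedOnlyAt_pathGraphTail (t : Fin (ℓ + 1)) :
    IsAttachedOnlyAt (pathGraphTail t) 0 := by
  intro s x hadj hx
  rw [pathGraph_adj, val_pathGraphTail] at hadj
  by_contra hs
  have hpos : (s : ℕ) ≠ 0 := Fin.val_ne_zero_iff.mpr hs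
  exact hx ⟨⟨x - t, by omega⟩, Fin.ext (by rw [val_pathGraphTail]; dsimp only; omega)⟩

theorem degree_pathGraph_last (hℓ : 0 < ℓ)
    [Fintype ((pathGraph (ℓ + 1)).neighborSet (Fin.last ℓ))] :
    (pathGraph (ℓ + 1)).degree (Fin.last ℓ) = 1 := by
  rw [degree_eq_one_iff_existsUnique_adj]
  refine ⟨⟨ℓ - 1, by omega⟩, ?_, fun s hs ↦ Fin.ext ?_⟩
  · simp only [pathGraph_adj, Fin.val_last]
    omega
  · simp only [pathGraph_adj, Fin.val_last] at hs ⊢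
    omega

theorem IsAttachedOnlyAt.card_ekrStar_le_last [Fintype V] {G : SimpleGraph V} {r : ℕ}
    {p : pathGraph (ℓ + 1) ↪g G} (hp : IsAttachedOnlyAt p 0) (t : Fin (ℓ + 1)) :
    #(ekrStar G r (p t)) ≤ #(ekrStar G r (p (Fin.last ℓ))) := by
  have htail : IsAttachedOnlyAt (p.comp (pathGraphTail t)) 0 := by
    refine hp.comp (isAttachedOnlyAt_pathGraphTail t) fun s hs ↦ Fin.ext ?_
    have := congrArg Fin.val hs
    simp only [val_pathGraphTail, Fin.val_zero] at this ⊢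
    omega
  have hstart : pathGraphTail t 0 = t := Fin.ext (by simp)
  have hend : pathGraphTail t (pathGraphRev _ 0) = Fin.last ℓ :=
    Fin.ext (Nat.add_sub_cancel' (Fin.is_le t))
  simpa only [SimpleGraph.Embedding.coe_comp, Function.comp_apply, hstart, hend] using
    htail.card_ekrStar_le (r := r) (pathGraphRev _)

end PendantPath

section SuperClaw

variable {n k a : ℕ}

theorem kaClaw_adj_none_some {i : Fin k} {j : Fin a} :
    (kaClaw k a).Adj none (some (i, j)) ↔ (j : ℕ) = 0 := by
  simp [kaClaw]

theorem kaClaw_adj_some_some {i i' : Fin k} {j j' : Fin a} :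
    (kaClaw k a).Adj (some (i, j)) (some (i', j')) ↔
      i = i' ∧ ((j : ℕ) + 1 = j' ∨ (j' : ℕ) + 1 = j) := by
  simp only [kaClaw, fromRel_adj]
  grind

theorem superClaw_adj_none_some {m : Fin n} {u : Option (Fin k × Fin a)} :
    (superClaw n k a).Adj none (some (m, u)) ↔ u = none := by
  simp [superClaw]

theorem superClaw_adj_some_some {m m' : Fin n} {u u' : Option (Fin k × Fin a)} :
    (superClaw n k a).Adj (some (m, u)) (some (m', u')) ↔ m = m' ∧ (kaClaw k a).Adj u u' := by
  simp only [superClaw, fromRel_adj]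
  grind [SimpleGraph.adj_comm, SimpleGraph.irrefl]

/-- The limb `i` of the `(k,a)`-claw, as a path that starts at the root of the claw. -/
def kaClawLimb (i : Fin k) : pathGraph (a + 1) ↪g kaClaw k a where
  toFun := Fin.cases none fun j ↦ some (i, j)
  inj' s t := by
    cases s using Fin.cases <;> cases t using Fin.cases <;> simp
  map_rel_iff' := by
    intro s t
    rw [pathGraph_adj]
    cases s using Fin.cases <;> cases t using Fin.cases
    · exact iff_of_false (SimpleGraph.irrefl _) (by simp)
    · exact kaClaw_adj_none_some.trans (by simp [eq_comm])
    · exact ((kaClaw k a).adj_comm _ _).trans (kaClaw_adj_none_some.trans (by simp [eq_comm]))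
    · exact kaClaw_adj_some_some.trans (by simp)

@[simp]
theorem kaClawLimb_zero (i : Fin k) : kaClawLimb (a := a) i 0 = none :=
  rfl

@[simp]
theorem kaClawLimb_succ (i : Fin k) (j : Fin a) : kaClawLimb i j.succ = some (i, j) :=
  rfl

theorem isAttachedOnlyAt_kaClawLimb (i : Fin k) : IsAttachedOnlyAt (kaClawLimb (a := a) i) 0 := by
  intro t x hadj hx
  cases t using Fin.cases with
  | zero => rfl
  | succ j =>
    obtain _ | ⟨i', j'⟩ := x
    · exact absurd ⟨0, kaClawLimb_zero i⟩ hx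
    · rw [kaClawLimb_succ, kaClaw_adj_some_some] at hadj
      exact absurd ⟨j'.succ, by rw [kaClawLimb_succ, hadj.1]⟩ hx

theorem exists_kaClawLimb_eq (hk : 0 < k) (u : Option (Fin k × Fin a)) :
    ∃ i t, kaClawLimb i t = u := by
  obtain _ | ⟨i, j⟩ := u
  · exact ⟨⟨0, hk⟩, 0, kaClawLimb_zero _⟩
  · exact ⟨i, j.succ, kaClawLimb_succ i j⟩

/-- The `m`-th of the `n` disjoint `(k,a)`-claws of `T^{n,k,a}`. -/
def superClawClaw (m : Fin n) : kaClaw k a ↪g superClaw n k a where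
  toFun u := some (m, u)
  inj' u u' h := by simpa using h
  map_rel_iff' := superClaw_adj_some_some.trans (and_iff_right rfl)

theorem isAttachedOnlyAt_superClawClaw (m : Fin n) :
    IsAttachedOnlyAt (superClawClaw (k := k) (a := a) m) none := by
  intro u x hadj hx
  change (superClaw n k a).Adj (some (m, u)) x at hadj
  obtain _ | ⟨m', u'⟩ := x
  · exact superClaw_adj_none_some.mp hadj.symm
  · exact absurd ⟨u', by rw [(superClaw_adj_some_some.mp hadj).1]; rfl⟩ hx

/-- The limb `i` of the `m`-th claw of `T^{n,k,a}`, as a path that starts at the root of that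
claw. -/
def superClawLimb (m : Fin n) (i : Fin k) : pathGraph (a + 1) ↪g superClaw n k a :=
  (superClawClaw m).comp (kaClawLimb i)

theorem isAttachedOnlyAt_superClawLimb (m : Fin n) (i : Fin k) :
    IsAttachedOnlyAt (superClawLimb (a := a) m i) 0 :=
  (isAttachedOnlyAt_superClawClaw m).comp (isAttachedOnlyAt_kaClawLimb i) fun _ hs ↦
    (kaClawLimb i).injective hs

theorem exists_superClawLimb_eq (hk : 0 < k) {w : Option (Fin n × Option (Fin k × Fin a))}
    (hw : w ≠ none) : ∃ m i t, superClawLimb m i t = w := by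
  obtain ⟨⟨m, u⟩, rfl⟩ := Option.ne_none_iff_exists'.mp hw
  obtain ⟨i, t, rfl⟩ := exists_kaClawLimb_eq hk u
  exact ⟨m, i, t, rfl⟩

theorem degree_superClawLimb_last (ha : 0 < a) (m : Fin n) (i : Fin k) :
    (superClaw n k a).degree (superClawLimb m i (Fin.last a)) = 1 := by
  have hlast : Fin.last a ≠ 0 := Fin.val_ne_zero_iff.mp ha.ne'
  rw [(isAttachedOnlyAt_superClawLimb m i).degree_eq hlast, degree_pathGraph_last ha]

end SuperClaw

/-- If `w` is a vertex of `T^{n,k,a}` that is neither the root nor a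
leaf, then some leaf `y` satisfies `|I^(r)_y(T^{n,k,a})| ≥ |I^(r)_w(T^{n,k,a})|`. -/
theorem superClaw_leaf_star_ge (n k a r : ℕ) (hn : 0 < n) (hk : 0 < k) (ha : 0 < a)
    (hr : 0 < r) (w : Option (Fin n × Option (Fin k × Fin a)))
    (hroot : w ≠ none) (hleaf : (superClaw n k a).degree w ≠ 1) :
    ∃ y, (superClaw n k a).degree y = 1 ∧
      (ekrStar (superClaw n k a) r w).card ≤ (ekrStar (superClaw n k a) r y).card := by
  obtain ⟨m, i, t, rfl⟩ := exists_superClawLimb_eq hk hroot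
  exact ⟨superClawLimb m i (Fin.last a), degree_superClawLimb_last ha m i,
    (isAttachedOnlyAt_superClawLimb m i).card_ekrStar_le_last t⟩
end

section
/- Let a and b be nonnegative integers with a ≥ b, and let A be a finite family of sets each of size a such that |A₁ ∩ A₂| ≥ b for all A₁, A₂ in A. Then |A| ≤ |∂_{a−b} A|, where for a nonnegative integer s the s-shadow ∂_s A is the family of all sets S of size s such that S ⊆ A₀ for some A₀ in A. -/
open Finset

/-!
Call a weight `w` on `𝒜` balanced at `S` if the weights of the members of `𝒜` containing `S` add up
to zero. The inclusion vectors of the members of `𝒜`, indexed by the `s`-shadow, are linearly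
independent: a linear relation is a weight balanced at every `s`-set, hence, as `𝒜` is uniform, at
every set of size at most `s`. Since `#(A ∩ B) ^ i` counts the maps `Fin i → A` with range inside
`B`, it follows that `∑ B ∈ 𝒜, w B * p (#(A ∩ B)) = 0` for every polynomial `p` of degree at most
`s`. If at most `s` numbers occur as intersection sizes of distinct members of `𝒜`, we may take for
`p` the polynomial vanishing at these, and the sum reduces to a nonzero multiple of `w A`. For
Katona's theorem, the numbers are `b, …, a - 1`.
-/

section InclusionVectors

variable {α : Type*} [DecidableEq α] {𝒜 : Finset (Finset α)} {a s : ℕ}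

/-- The total weight of the members of `𝒜` containing `S`, for a weight `w` on finite sets. -/
def supersetSum {M : Type*} [AddCommMonoid M] (𝒜 : Finset (Finset α)) (w : Finset α → M)
    (S : Finset α) : M :=
  ∑ B ∈ 𝒜 with S ⊆ B, w B

/-- The column at `B` of the inclusion matrix of `𝒯`: the `0`-`1` vector over `K` indexed by `𝒯`
that marks the members of `𝒯` contained in `B`. -/
def inclusionVector (K : Type*) [Zero K] [One K] (𝒯 : Finset (Finset α)) (B : Finset α) : 𝒯 → K :=
  fun S ↦ if S.1 ⊆ B then 1 else 0

section Weights

variable {M : Type*} [AddCommMonoid M] {w : Finset α → M}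

theorem sum_supersetSum_insert (𝒜 : Finset (Finset α)) (w : Finset α → M) (I : Finset α) :
    ∑ x ∈ 𝒜.sup id \ I, supersetSum 𝒜 w (insert x I) = ∑ B ∈ 𝒜 with I ⊆ B, #(B \ I) • w B := by
  simp only [supersetSum, ← sum_const]
  refine sum_comm' fun x B ↦ ?_
  have mem_sup_of_mem (hB : B ∈ 𝒜) (hx : x ∈ B) : x ∈ 𝒜.sup id := mem_sup.2 ⟨B, hB, hx⟩
  simp only [mem_sdiff, mem_filter, insert_subset_iff]
  tauto

theorem supersetSum_eq_zero_of_card_le [IsAddTorsionFree M] (h𝒜 : (𝒜 : Set (Finset α)).Sized a)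
    (hsa : s ≤ a) (hw : ∀ S : Finset α, #S = s → supersetSum 𝒜 w S = 0) (I : Finset α)
    (hI : #I ≤ s) : supersetSum 𝒜 w I = 0 := by
  refine strongDownwardInduction (p := fun I ↦ supersetSum 𝒜 w I = 0) (fun I ih hI ↦ ?_) I hI
  obtain hIs | hIs := hI.eq_or_lt
  · exact hw I hIs
  have sum_insert : ∑ x ∈ 𝒜.sup id \ I, supersetSum 𝒜 w (insert x I) = 0 := by
    refine sum_eq_zero fun x hx ↦ ?_
    have hxI : x ∉ I := (mem_sdiff.1 hx).2
    exact ih ((card_insert_of_notMem hxI).trans_le hIs) (ssubset_insert hxI)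
  have card_sdiff_of_mem : ∀ B ∈ {B ∈ 𝒜 | I ⊆ B}, #(B \ I) • w B = (a - #I) • w B := by
    intro B hB
    obtain ⟨hB𝒜, hIB⟩ := mem_filter.1 hB
    rw [card_sdiff_of_subset hIB, h𝒜 hB𝒜]
  rw [sum_supersetSum_insert, sum_congr rfl card_sdiff_of_mem, ← smul_sum] at sum_insert
  exact (nsmul_eq_zero_iff_right (by omega)).1 sum_insert

end Weights

section Polynomials

variable {R : Type*} [CommSemiring R] {w : Finset α → R}

theorem sum_mul_card_inter_pow (𝒜 : Finset (Finset α)) (w : Finset α → R) (A : Finset α) (i : ℕ) :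
    ∑ B ∈ 𝒜, w B * (#(A ∩ B) : R) ^ i =
      ∑ f ∈ Fintype.piFinset fun _ : Fin i ↦ A, supersetSum 𝒜 w (univ.image f) := by
  have pow_eq (B : Finset α) :
      w B * (#(A ∩ B) : R) ^ i = ∑ _f ∈ Fintype.piFinset fun _ : Fin i ↦ A ∩ B, w B := by
    rw [sum_const, Fintype.card_piFinset_const, nsmul_eq_mul, Nat.cast_pow, mul_comm]
  simp only [pow_eq, supersetSum]
  refine sum_comm' fun B f ↦ ?_
  simp only [Fintype.mem_piFinset, mem_inter, mem_filter, image_subset_iff, mem_univ, true_imp_iff,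
    forall_and]
  tauto

theorem sum_mul_eval_card_inter_eq_zero
    (hw : ∀ I : Finset α, #I ≤ s → supersetSum 𝒜 w I = 0) (A : Finset α) {p : Polynomial R}
    (hp : p.natDegree ≤ s) : ∑ B ∈ 𝒜, w B * p.eval (#(A ∩ B) : R) = 0 := by
  have sum_pow : ∀ i ≤ s, ∑ B ∈ 𝒜, w B * (#(A ∩ B) : R) ^ i = 0 := by
    intro i hi
    rw [sum_mul_card_inter_pow]
    exact sum_eq_zero fun f _ ↦ hw _ (card_image_le.trans (by simpa using hi))
  simp only [Polynomial.eval_eq_sum_range, mul_sum]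
  rw [sum_comm]
  refine sum_eq_zero fun i hi ↦ ?_
  simp only [mul_left_comm (w _), ← mul_sum]
  rw [sum_pow i (by grind), mul_zero]

end Polynomials

theorem card_inter_lt_of_sized (h𝒜 : (𝒜 : Set (Finset α)).Sized a) {A B : Finset α} (hA : A ∈ 𝒜)
    (hB : B ∈ 𝒜) (hAB : A ≠ B) : #(A ∩ B) < a := by
  rw [← h𝒜 hA]
  refine card_lt_card (inter_subset_left.ssubset_of_ne fun h ↦ hAB ?_)
  exact eq_of_subset_of_card_le (inter_eq_left.1 h) (by rw [h𝒜 hA, h𝒜 hB])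

theorem eq_zero_of_supersetSum_eq_zero {R : Type*} [CommRing R] [IsDomain R] [CharZero R]
    {w : Finset α → R} {L : Finset ℕ} (h𝒜 : (𝒜 : Set (Finset α)).Sized a)
    (hL : (𝒜 : Set (Finset α)).Pairwise fun A B ↦ #(A ∩ B) ∈ L) (hLs : #L ≤ s) (hsa : s ≤ a)
    (hw : ∀ S : Finset α, #S = s → supersetSum 𝒜 w S = 0) {A : Finset α} (hA : A ∈ 𝒜) :
    w A = 0 := by
  let p : Polynomial R := ∏ l ∈ L.erase a, (Polynomial.X - Polynomial.C (l : R))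
  have p_natDegree : p.natDegree ≤ s := by
    rw [Polynomial.natDegree_finsetProd_X_sub_C_eq_card]
    exact card_erase_le.trans hLs
  have p_eval_eq_zero_iff (n : ℕ) : p.eval (n : R) = 0 ↔ n ∈ L.erase a := by
    simp [p, Polynomial.eval_prod, prod_eq_zero_iff, sub_eq_zero]
  have p_eval_inter : ∀ B ∈ 𝒜, B ≠ A → w B * p.eval (#(A ∩ B) : R) = 0 := by
    intro B hB hBA
    have inter_ne : #(A ∩ B) ≠ a := (card_inter_lt_of_sized h𝒜 hA hB hBA.symm).ne
    rw [(p_eval_eq_zero_iff _).2 (mem_erase.2 ⟨inter_ne, hL hA hB hBA.symm⟩), mul_zero]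
  have weighted_sum : ∑ B ∈ 𝒜, w B * p.eval (#(A ∩ B) : R) = 0 :=
    sum_mul_eval_card_inter_eq_zero (supersetSum_eq_zero_of_card_le h𝒜 hsa hw) A p_natDegree
  rw [sum_eq_single_of_mem A hA p_eval_inter, inter_self, h𝒜 hA] at weighted_sum
  exact (mul_eq_zero.1 weighted_sum).resolve_right
    ((p_eval_eq_zero_iff a).not.2 (notMem_erase a L))

theorem supersetSum_eq_zero_of_notMem_shadow {M : Type*} [AddCommMonoid M] (w : Finset α → M)
    {S : Finset α} (hS : S ∉ 𝒜.sup (powersetCard #S)) : supersetSum 𝒜 w S = 0 := by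
  refine sum_eq_zero fun B hB ↦ absurd ?_ hS
  obtain ⟨hB𝒜, hSB⟩ := mem_filter.1 hB
  exact mem_sup.2 ⟨B, hB𝒜, mem_powersetCard.2 ⟨hSB, rfl⟩⟩

theorem sum_smul_inclusionVector_apply {R : Type*} [Semiring R] (𝒜 𝒯 : Finset (Finset α))
    (w : Finset α → R) (S : 𝒯) :
    (∑ B ∈ 𝒜, w B • inclusionVector R 𝒯 B) S = supersetSum 𝒜 w S := by
  simp [inclusionVector, supersetSum, sum_filter]

theorem linearIndepOn_inclusionVector_shadow (R : Type*) [CommRing R] [IsDomain R] [CharZero R]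
    {L : Finset ℕ} (h𝒜 : (𝒜 : Set (Finset α)).Sized a)
    (hL : (𝒜 : Set (Finset α)).Pairwise fun A B ↦ #(A ∩ B) ∈ L) (hLs : #L ≤ s) (hsa : s ≤ a) :
    LinearIndepOn R (inclusionVector R (𝒜.sup (powersetCard s))) (𝒜 : Set (Finset α)) := by
  rw [linearIndepOn_finset_iff]
  intro w relation A hA
  refine eq_zero_of_supersetSum_eq_zero h𝒜 hL hLs hsa (fun S hS ↦ ?_) hA
  by_cases hS𝒯 : S ∈ 𝒜.sup (powersetCard s)
  · rw [← sum_smul_inclusionVector_apply 𝒜 _ w ⟨S, hS𝒯⟩, relation, Pi.zero_apply]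
  · exact supersetSum_eq_zero_of_notMem_shadow w (hS ▸ hS𝒯)

theorem katona_shadow_general {L : Finset ℕ} (h𝒜 : (𝒜 : Set (Finset α)).Sized a)
    (hL : (𝒜 : Set (Finset α)).Pairwise fun A B ↦ #(A ∩ B) ∈ L) (hLs : #L ≤ s) (hsa : s ≤ a) :
    #𝒜 ≤ #(𝒜.sup (powersetCard s)) := by
  simpa using (linearIndepOn_inclusionVector_shadow ℚ h𝒜 hL hLs hsa).fintype_card_le_finrank

end InclusionVectors

/-- Katona's shadow lemma. If `𝒜` is a finite family of `a`-sets whose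
pairwise intersections all have size at least `b`, then `|𝒜| ≤ |∂_{a−b} 𝒜|`, where the
`s`-shadow `∂_s 𝒜` is the family of all `s`-sets contained in some member of `𝒜`
(here realised as `𝒜.sup (fun A => A.powersetCard (a − b))`). -/
theorem katona_shadow {α : Type*} [DecidableEq α] (a b : ℕ) (hba : b ≤ a)
    (𝒜 : Finset (Finset α)) (hsize : ∀ A ∈ 𝒜, A.card = a)
    (hint : ∀ A₁ ∈ 𝒜, ∀ A₂ ∈ 𝒜, b ≤ (A₁ ∩ A₂).card) :
    𝒜.card ≤ (𝒜.sup fun A => Finset.powersetCard (a - b) A).card :=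
  katona_shadow_general hsize
    (fun A hA B hB hAB ↦ mem_Ico.2 ⟨hint A hA B hB, card_inter_lt_of_sized hsize hA hB hAB⟩)
    (Nat.card_Ico b a).le (Nat.sub_le a b)
end
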